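/- There exists v₀ ∈ ℝ⁶ that minimizes μ over ℝ⁶ (μ(v₀) ≤ μ(v) for all v ∈ ℝ⁶) and whose configuration satisfies condition K₂. -/

import Mathlib

open Real MeasureTheory

noncomputable def pt (x y : ℝ) : EuclideanSpace ℝ (Fin 2) :=
  (WithLp.equiv 2 (Fin 2 → ℝ)).symm ![x, y]

noncomputable def sqVertex (x y a : ℝ) (k : Fin 4) : EuclideanSpace ℝ (Fin 2) :=
  pt (x + Real.sqrt 2 / 6 * Real.cos (a + ((k : ℕ) : ℝ) * (Real.pi / 2)))
     (y + Real.sqrt 2 / 6 * Real.sin (a + ((k : ℕ) : ℝ) * (Real.pi / 2)))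

noncomputable def triVertex (x y b : ℝ) (k : Fin 3) : EuclideanSpace ℝ (Fin 2) :=
  pt (x + Real.sqrt 3 / 6 * Real.cos (b + ((k : ℕ) : ℝ) * (2 * Real.pi / 3)))
     (y + Real.sqrt 3 / 6 * Real.sin (b + ((k : ℕ) : ℝ) * (2 * Real.pi / 3)))

noncomputable def config (x1 y1 a x2 y2 b : ℝ) : Set (EuclideanSpace ℝ (Fin 2)) :=
  {pt 0 0, pt 1 0} ∪ Set.range (sqVertex x1 y1 a) ∪ Set.range (triVertex x2 y2 b)

noncomputable def area (x1 y1 a x2 y2 b : ℝ) : ℝ :=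
  (volume (convexHull ℝ (config x1 y1 a x2 y2 b))).toReal

noncomputable def segEF : Set (EuclideanSpace ℝ (Fin 2)) := segment ℝ (pt 0 0) (pt 1 0)

def K2 (x1 y1 a x2 y2 b : ℝ) : Prop :=
  (∀ p ∈ convexHull ℝ (Set.range (sqVertex x1 y1 a)) ∪
        convexHull ℝ (Set.range (triVertex x2 y2 b)),
      Metric.infDist p segEF ≤ 1 ∧ p 1 ∈ Set.Icc (-0.46 : ℝ) 0.46) ∧
  (convexHull ℝ (Set.range (sqVertex x1 y1 a)) ∩ segEF).Nonempty ∧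
  (convexHull ℝ (Set.range (triVertex x2 y2 b)) ∩ segEF).Nonempty


abbrev E2 := EuclideanSpace ℝ (Fin 2)

@[simp] lemma pt_zero (x y : ℝ) : (pt x y) 0 = x := rfl
@[simp] lemma pt_one (x y : ℝ) : (pt x y) 1 = y := rfl

lemma pt_eta (p : E2) : pt (p 0) (p 1) = p := by
  ext i; fin_cases i <;> rfl

lemma pt_comb (a b x y u v : ℝ) :
    a • pt x y + b • pt u v = pt (a * x + b * u) (a * y + b * v) := by
  ext i; fin_cases i <;> rfl

lemma pt_add (x y u v : ℝ) : pt x y + pt u v = pt (x + u) (y + v) := by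
  ext i; fin_cases i <;> rfl

lemma pt_dist_sq (p q : E2) : dist p q ^ 2 = (p 0 - q 0) ^ 2 + (p 1 - q 1) ^ 2 := by
  rw [EuclideanSpace.dist_eq, Real.sq_sqrt (by positivity)]
  simp [Fin.sum_univ_two, Real.dist_eq, sq_abs]

lemma vol_pre (A : Set (ℝ × ℝ)) (hA : MeasurableSet A) :
    volume {p : E2 | (p 0, p 1) ∈ A} = volume A := by
  have h := (volume_preserving_finTwoArrow ℝ).comp
    (EuclideanSpace.volume_preserving_symm_measurableEquiv_toLp (Fin 2)) 
  exact h.measure_preimage hA.nullMeasurableSet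

lemma affine_int (a b k c : ℝ) (hab : a ≤ b) :
    ∫ x in Set.Ioc a b, (k * x + c) = (b - a) * (k * (a + b) / 2 + c) := by
  rw [← intervalIntegral.integral_of_le hab]
  rw [intervalIntegral.integral_add, intervalIntegral.integral_const_mul]
  · simp
    ring
  · exact (by fun_prop : Continuous fun x : ℝ => k * x).intervalIntegrable _ _
  · simp

def region (a b m1 c1 m2 c2 : ℝ) : Set E2 :=
  {p | a < p 0 ∧ p 0 ≤ b ∧ m1 * p 0 + c1 < p 1 ∧ p 1 < m2 * p 0 + c2}

lemma region_eq (a b m1 c1 m2 c2 : ℝ) : region a b m1 c1 m2 c2 =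
    {p : E2 | (p 0, p 1) ∈ regionBetween (fun x => m1 * x + c1) (fun x => m2 * x + c2)
      (Set.Ioc a b)} := by
  ext p
  simp [region, regionBetween, and_assoc]

lemma region_meas0 (a b m1 c1 m2 c2 : ℝ) :
    MeasurableSet (regionBetween (fun x => m1 * x + c1) (fun x => m2 * x + c2)
      (Set.Ioc a b)) :=
  measurableSet_regionBetween (by fun_prop) (by fun_prop) measurableSet_Ioc

lemma region_meas (a b m1 c1 m2 c2 : ℝ) : MeasurableSet (region a b m1 c1 m2 c2) := by
  rw [region_eq]
  have : Measurable fun p : E2 => (p 0, p 1) := by fun_prop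
  exact this (region_meas0 a b m1 c1 m2 c2)

lemma region_vol (a b m1 c1 m2 c2 : ℝ) (hab : a ≤ b)
    (ha : m1 * a + c1 ≤ m2 * a + c2) (hb : m1 * b + c1 ≤ m2 * b + c2) :
    volume (region a b m1 c1 m2 c2) =
      ENNReal.ofReal ((b - a) * ((m2 - m1) * (a + b) / 2 + (c2 - c1))) := by
  rw [region_eq, vol_pre _ (region_meas0 ..), Measure.volume_eq_prod,
    volume_regionBetween_eq_integral]
  · congr 1
    rw [← affine_int _ _ _ _ hab]
    congr 1
    ext x
    simp only [Pi.sub_apply]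
    ring
  · exact (by fun_prop : Continuous fun x : ℝ => m1 * x + c1).integrableOn_Ioc
  · exact (by fun_prop : Continuous fun x : ℝ => m2 * x + c2).integrableOn_Ioc
  · exact measurableSet_Ioc
  · intro x hx
    have h1 := hx.1; have h2 := hx.2
    have hab' : a < b := lt_of_lt_of_le h1 h2
    have e1 : (b - x) * (m1 * a + c1) ≤ (b - x) * (m2 * a + c2) :=
      mul_le_mul_of_nonneg_left ha (by linarith)
    have e2 : (x - a) * (m1 * b + c1) ≤ (x - a) * (m2 * b + c2) :=
      mul_le_mul_of_nonneg_left hb (by linarith)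
    have : (b - a) * (m1 * x + c1) ≤ (b - a) * (m2 * x + c2) := by linarith
    exact le_of_mul_le_mul_left this (by linarith)

lemma comb_mem {H : Set E2} (hH : Convex ℝ H) {x y u v : ℝ} (h1 : pt x y ∈ H) (h2 : pt u v ∈ H)
    (t : ℝ) (h0 : 0 ≤ t) (ht : t ≤ 1) : pt ((1 - t) * x + t * u) ((1 - t) * y + t * v) ∈ H := by
  rw [← pt_comb]
  exact hH h1 h2 (by linarith) h0 (by ring)

lemma vert_mem {H : Set E2} (hH : Convex ℝ H) {x u v w : ℝ} (h1 : pt x u ∈ H) (h2 : pt x v ∈ H)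
    (huw : u ≤ w) (hwv : w ≤ v) : pt x w ∈ H := by
  rcases eq_or_lt_of_le (huw.trans hwv) with h | h
  · have : w = u := by linarith
    rwa [this]
  · have := comb_mem hH h1 h2 ((w - u) / (v - u)) (div_nonneg (by linarith) (by linarith))
      ((div_le_one (by linarith)).2 (by linarith))
    have hne : v - u ≠ 0 := by linarith
    convert this using 2
    · ring
    · field_simp
      ring

/-- A convex set with two vertical chords contains the trapezoid between them. -/
lemma slab_lower {H : Set E2} (hH : Convex ℝ H) {a b u1 u2 v1 v2 : ℝ} (hab : a ≤ b)
    (hu : u1 ≤ u2) (hv : v1 ≤ v2) (h1 : pt a u1 ∈ H) (h2 : pt a u2 ∈ H)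
    (h3 : pt b v1 ∈ H) (h4 : pt b v2 ∈ H) :
    ∃ R ⊆ H, MeasurableSet R ∧ (∀ p ∈ R, a < p 0 ∧ p 0 ≤ b) ∧
      volume R = ENNReal.ofReal ((b - a) * ((u2 - u1) + (v2 - v1)) / 2) := by
  rcases eq_or_lt_of_le hab with rfl | hab'
  · exact ⟨∅, by simp, by simp, by simp, by simp⟩
  have hne : b - a ≠ 0 := by linarith
  set m1 := (v1 - u1) / (b - a) with hm1
  set m2 := (v2 - u2) / (b - a) with hm2
  have k1 : m1 * (b - a) = v1 - u1 := by rw [hm1]; field_simp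
  have k2 : m2 * (b - a) = v2 - u2 := by rw [hm2]; field_simp
  refine ⟨region a b m1 (u1 - m1 * a) m2 (u2 - m2 * a), ?_, region_meas .., ?_, ?_⟩
  · rintro p ⟨p1, p2, p3, p4⟩
    rw [← pt_eta p]
    have ht0 : 0 ≤ (p 0 - a) / (b - a) := div_nonneg (by linarith) (by linarith)
    have ht1 : (p 0 - a) / (b - a) ≤ 1 := (div_le_one (by linarith)).2 (by linarith)
    have q1 := comb_mem hH h1 h3 _ ht0 ht1
    have q2 := comb_mem hH h2 h4 _ ht0 ht1
    have ex : (1 - (p 0 - a) / (b - a)) * a + (p 0 - a) / (b - a) * b = p 0 := by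
      field_simp; ring
    rw [ex] at q1 q2
    refine vert_mem hH q1 q2 (le_of_eq_of_le ?_ p3.le) (le_of_le_of_eq p4.le ?_)
    · rw [hm1]; field_simp; ring
    · rw [hm2]; field_simp; ring
  · rintro p ⟨p1, p2, p3, p4⟩
    exact ⟨p1, p2⟩
  · rw [region_vol _ _ _ _ _ _ hab (by linarith) (by linarith)]
    congr 1
    linear_combination (b - a) / 2 * (k2 - k1)

lemma hex_lower {H : Set E2} (hH : Convex ℝ H) {D x1 x2 u1 u2 v1 v2 : ℝ}
    (hx1 : 0 ≤ x1) (hx : x1 ≤ x2) (hx2 : x2 ≤ D)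
    (hu : u1 ≤ u2) (hv : v1 ≤ v2) (hP : pt 0 0 ∈ H) (hQ : pt D 0 ∈ H)
    (h1 : pt x1 u1 ∈ H) (h2 : pt x1 u2 ∈ H)
    (h3 : pt x2 v1 ∈ H) (h4 : pt x2 v2 ∈ H) :
    ENNReal.ofReal ((x1 * (u2 - u1) + (x2 - x1) * ((u2 - u1) + (v2 - v1))
      + (D - x2) * (v2 - v1)) / 2) ≤ volume H := by
  obtain ⟨R1, s1, m1, b1, w1⟩ := slab_lower hH hx1 le_rfl hu hP hP h1 h2
  obtain ⟨R2, s2, m2, b2, w2⟩ := slab_lower hH hx hu hv h1 h2 h3 h4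
  obtain ⟨R3, s3, m3, b3, w3⟩ := slab_lower hH hx2 hv le_rfl h3 h4 hQ hQ
  have d12 : Disjoint R1 R2 := Set.disjoint_left.2 fun p hp hq =>
    absurd (b1 p hp).2 (not_le.2 (b2 p hq).1)
  have d3 : Disjoint (R1 ∪ R2) R3 := Set.disjoint_left.2 fun p hp hq => by
    have h3 := (b3 p hq).1
    rcases hp with hp | hp
    · have := (b1 p hp).2; linarith
    · have := (b2 p hp).2; linarith
  calc _ = volume R1 + volume R2 + volume R3 := by
        rw [w1, w2, w3, ← ENNReal.ofReal_add, ← ENNReal.ofReal_add]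
        · congr 1; ring
        · have : 0 ≤ x1 * (u2 - u1) := mul_nonneg (by linarith) (by linarith)
          have : 0 ≤ (x2 - x1) * ((u2 - u1) + (v2 - v1)) := mul_nonneg (by linarith) (by linarith)
          linarith
        · have : 0 ≤ (D - x2) * (v2 - v1) := mul_nonneg (by linarith) (by linarith)
          linarith
        · have : 0 ≤ x1 * (u2 - u1) := mul_nonneg (by linarith) (by linarith)
          linarith
        · have : 0 ≤ (x2 - x1) * ((u2 - u1) + (v2 - v1)) := mul_nonneg (by linarith) (by linarith)
          linarith
    _ = volume (R1 ∪ R2 ∪ R3) := by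
        rw [measure_union d3 m3, measure_union d12 m2]
    _ ≤ volume H := measure_mono (Set.union_subset (Set.union_subset s1 s2) s3)

lemma hex_real {H : Set E2} (hH : Convex ℝ H) {D x1 x2 u1 u2 v1 v2 : ℝ}
    (hvol : volume H ≤ ENNReal.ofReal 0.23)
    (hx1 : 0 ≤ x1) (hx : x1 ≤ x2) (hx2 : x2 ≤ D)
    (hu : u1 ≤ u2) (hv : v1 ≤ v2) (hP : pt 0 0 ∈ H) (hQ : pt D 0 ∈ H)
    (h1 : pt x1 u1 ∈ H) (h2 : pt x1 u2 ∈ H)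
    (h3 : pt x2 v1 ∈ H) (h4 : pt x2 v2 ∈ H) :
    x1 * (u2 - u1) + (x2 - x1) * ((u2 - u1) + (v2 - v1))
      + (D - x2) * (v2 - v1) ≤ 0.46 := by
  have := (hex_lower hH hx1 hx hx2 hu hv hP hQ h1 h2 h3 h4).trans hvol
  rw [ENNReal.ofReal_le_ofReal_iff (by norm_num)] at this
  linarith

lemma sqV0 (x y a : ℝ) : sqVertex x y a 0 = pt (x + √2 / 6 * cos a) (y + √2 / 6 * sin a) := by
  simp [sqVertex]

lemma sqV1 (x y a : ℝ) : sqVertex x y a 1 = pt (x - √2 / 6 * sin a) (y + √2 / 6 * cos a) := by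
  simp [sqVertex, cos_add_pi_div_two, sin_add_pi_div_two, sub_eq_add_neg]

lemma sqV2 (x y a : ℝ) : sqVertex x y a 2 = pt (x - √2 / 6 * cos a) (y - √2 / 6 * sin a) := by
  have : a + (((2 : Fin 4) : ℕ) : ℝ) * (π / 2) = a + π := by simp; ring
  simp only [sqVertex, this, cos_add_pi, sin_add_pi]
  congr 1 <;> ring

lemma sqV3 (x y a : ℝ) : sqVertex x y a 3 = pt (x + √2 / 6 * sin a) (y - √2 / 6 * cos a) := by
  have : a + (((3 : Fin 4) : ℕ) : ℝ) * (π / 2) = a + π + π / 2 := by simp; ring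
  simp only [sqVertex, this, cos_add_pi, sin_add_pi, cos_add_pi_div_two, sin_add_pi_div_two]
  congr 1 <;> ring

lemma cos_two_pi_third : cos (2 * π / 3) = -1 / 2 := by
  have : 2 * π / 3 = π - π / 3 := by ring
  rw [this, cos_pi_sub, cos_pi_div_three]; ring

lemma sin_two_pi_third : sin (2 * π / 3) = √3 / 2 := by
  have : 2 * π / 3 = π - π / 3 := by ring
  rw [this, sin_pi_sub, sin_pi_div_three]

lemma cos_four_pi_third : cos (2 * (2 * π / 3)) = -1 / 2 := by
  have : 2 * (2 * π / 3) = π / 3 + π := by ring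
  rw [this, cos_add_pi, cos_pi_div_three]; ring

lemma sin_four_pi_third : sin (2 * (2 * π / 3)) = -(√3 / 2) := by
  have : 2 * (2 * π / 3) = π / 3 + π := by ring
  rw [this, sin_add_pi, sin_pi_div_three]

lemma triV0 (x y b : ℝ) : triVertex x y b 0 = pt (x + √3 / 6 * cos b) (y + √3 / 6 * sin b) := by
  simp [triVertex]

lemma triV1 (x y b : ℝ) : triVertex x y b 1 =
    pt (x - √3 / 12 * cos b - sin b / 4) (y - √3 / 12 * sin b + cos b / 4) := by
  have h3 : √3 * √3 = 3 := Real.mul_self_sqrt (by norm_num)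
  have : b + (((1 : Fin 3) : ℕ) : ℝ) * (2 * π / 3) = b + 2 * π / 3 := by simp
  simp only [triVertex, this, cos_add, sin_add, cos_two_pi_third, sin_two_pi_third]
  congr 1
  · linear_combination (-sin b / 12) * h3
  · linear_combination (cos b / 12) * h3

lemma triV2 (x y b : ℝ) : triVertex x y b 2 =
    pt (x - √3 / 12 * cos b + sin b / 4) (y - √3 / 12 * sin b - cos b / 4) := by
  have h3 : √3 * √3 = 3 := Real.mul_self_sqrt (by norm_num)
  have : b + (((2 : Fin 3) : ℕ) : ℝ) * (2 * π / 3) = b + 2 * (2 * π / 3) := by simp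
  simp only [triVertex, this, cos_add, sin_add, cos_four_pi_third, sin_four_pi_third]
  congr 1
  · linear_combination (sin b / 12) * h3
  · linear_combination (-cos b / 12) * h3

/-- The inscribed disc of the square. -/
lemma ball_sq {H : Set E2} (hH : Convex ℝ H) (x y a dx dy : ℝ)
    (hv : ∀ k, sqVertex x y a k ∈ H) (hd : dx ^ 2 + dy ^ 2 ≤ 1 / 36) :
    pt (x + dx) (y + dy) ∈ H := by
  have h2 : √2 * √2 = 2 := Real.mul_self_sqrt (by norm_num)
  have hcs := Real.sin_sq_add_cos_sq a
  set c := cos a with hc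
  set s := sin a with hs
  -- coordinates in the frame of the square
  set α := (dx * c + dy * s) * (3 * √2) with hα
  set β := (-dx * s + dy * c) * (3 * √2) with hβ
  have hsum : α ^ 2 + β ^ 2 ≤ 1 / 2 := by
    have : α ^ 2 + β ^ 2 = 18 * (dx ^ 2 + dy ^ 2) := by
      rw [hα, hβ]
      linear_combination (9 * (dx ^ 2 + dy ^ 2) * (s^2 + c^2)) * h2 + 18 * (dx ^ 2 + dy ^ 2) * hcs
    linarith
  have hab : |α| + |β| ≤ 1 := by
    have h0 : (|α| + |β|) ^ 2 ≤ 1 := by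
      nlinarith [sq_nonneg (|α| - |β|), sq_abs α, sq_abs β]
    nlinarith [abs_nonneg α, abs_nonneg β]
  have e0 : α / 6 * √2 = dx * c + dy * s := by
    rw [hα]; linear_combination (dx * c + dy * s) / 2 * h2
  have e1 : β / 6 * √2 = -dx * s + dy * c := by
    rw [hβ]; linear_combination (-dx * s + dy * c) / 2 * h2
  have h0 := hv 0
  have h1 := hv 1
  have h2' := hv 2
  have h3 := hv 3
  rw [sqV0] at h0
  rw [sqV1] at h1
  rw [sqV2] at h2'
  rw [sqV3] at h3
  set w := (1 - |α| - |β|) / 4 with hw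
  have hwn : 0 ≤ w := by rw [hw]; linarith
  have p1 := le_abs_self α
  have p2 := neg_abs_le α
  have p3 := le_abs_self β
  have p4 := neg_abs_le β
  have key := hH.sum_mem (t := Finset.univ)
    (w := ![w + (|α| + α) / 2, w + (|β| + β) / 2, w + (|α| - α) / 2, w + (|β| - β) / 2])
    (z := ![_, _, _, _])
    (by intro i _; fin_cases i <;> simp <;> linarith)
    (by simp [Fin.sum_univ_four]; rw [hw]; ring)
    (by intro i _; fin_cases i; exacts [h0, h1, h2', h3])
  simp only [Fin.sum_univ_four] at key
  convert key using 1
  ext i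
  fin_cases i
  · simp
    rw [hw, ← hc, ← hs]
    linear_combination (-c) * e0 + s * e1 - dx * hcs
  · simp
    rw [hw, ← hc, ← hs]
    linear_combination (-s) * e0 - c * e1 - dy * hcs

lemma tri_chord_sorted {H : Set E2} (hH : Convex ℝ H) {x1 y1 x2 y2 x3 y3 : ℝ}
    (h12 : x1 ≤ x2) (h23 : x2 ≤ x3)
    (h1 : pt x1 y1 ∈ H) (h2 : pt x2 y2 ∈ H) (h3 : pt x3 y3 ∈ H)
    (hc : ((x2 - x1) * (y3 - y1) - (x3 - x1) * (y2 - y1)) ^ 2 = 3 / 64)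
    (hd : (x3 - x1) ^ 2 ≤ 1 / 4) :
    ∃ u v, pt x2 u ∈ H ∧ pt x2 v ∈ H ∧ 0.433 ≤ v - u := by
  have hlt : x1 < x3 := by
    rcases eq_or_lt_of_le (h12.trans h23) with h | h
    · exfalso
      have : x2 = x1 := by linarith
      rw [this, ← h] at hc
      norm_num at hc
    · exact h
  have hpos : 0 < x3 - x1 := by linarith
  set t := (x2 - x1) / (x3 - x1) with ht
  have htm : t * (x3 - x1) = x2 - x1 := by rw [ht]; field_simp
  have q := comb_mem hH h1 h3 t (div_nonneg (by linarith) hpos.le)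
    ((div_le_one hpos).2 (by linarith))
  have ex : (1 - t) * x1 + t * x3 = x2 := by linarith
  rw [ex] at q
  set z := (1 - t) * y1 + t * y3 with hz
  have hcr : (x3 - x1) * (z - y2) = (x2 - x1) * (y3 - y1) - (x3 - x1) * (y2 - y1) := by
    rw [hz]; linear_combination (y3 - y1) * htm
  rw [← hcr, mul_pow] at hc
  have hzz : 0.433 ^ 2 ≤ (z - y2) ^ 2 := by
    nlinarith [sq_nonneg (z - y2)]
  rcases le_total y2 z with h | h
  · exact ⟨y2, z, h2, q, by nlinarith⟩
  · refine ⟨z, y2, q, h2, ?_⟩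
    nlinarith

lemma tri_chord {H : Set E2} (hH : Convex ℝ H) (x y b : ℝ)
    (hv : ∀ k, triVertex x y b k ∈ H) :
    ∃ k u v, pt (triVertex x y b k 0) u ∈ H ∧ pt (triVertex x y b k 0) v ∈ H ∧
      0.433 ≤ v - u := by
  have h3 : √3 * √3 = 3 := Real.mul_self_sqrt (by norm_num)
  have hcs := Real.sin_sq_add_cos_sq b
  have h0 := hv 0
  have h1 := hv 1
  have h2 := hv 2
  have key : ∃ u v, (pt (triVertex x y b 0 0) u ∈ H ∧ pt (triVertex x y b 0 0) v ∈ H ∧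
      0.433 ≤ v - u) ∨ (pt (triVertex x y b 1 0) u ∈ H ∧ pt (triVertex x y b 1 0) v ∈ H ∧
      0.433 ≤ v - u) ∨ (pt (triVertex x y b 2 0) u ∈ H ∧ pt (triVertex x y b 2 0) v ∈ H ∧
      0.433 ≤ v - u) := by
    rw [triV0] at h0 ⊢
    rw [triV1] at h1 ⊢
    rw [triV2] at h2 ⊢
    simp only [pt_zero]
    set c := cos b
    set s := sin b
    generalize hX0 : x + √3 / 6 * c = X0 at *
    generalize hY0 : y + √3 / 6 * s = Y0 at *
    generalize hX1 : x - √3 / 12 * c - s / 4 = X1 at *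
    generalize hY1 : y - √3 / 12 * s + c / 4 = Y1 at *
    generalize hX2 : x - √3 / 12 * c + s / 4 = X2 at *
    generalize hY2 : y - √3 / 12 * s - c / 4 = Y2 at *
    have cr : ((X1 - X0) * (Y2 - Y0) - (X2 - X0) * (Y1 - Y0)) ^ 2 = 3 / 64 := by
      have : (X1 - X0) * (Y2 - Y0) - (X2 - X0) * (Y1 - Y0) = √3 / 8 := by
        rw [← hX0, ← hX1, ← hX2, ← hY0, ← hY1, ← hY2]
        linear_combination √3 / 8 * hcs
      rw [this]
      linear_combination h3 / 64
    have d01 : (X1 - X0) ^ 2 ≤ 1 / 4 := by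
      have : (X1 - X0) ^ 2 + (Y1 - Y0) ^ 2 = 1 / 4 := by
        rw [← hX0, ← hX1, ← hY0, ← hY1]
        linear_combination (s ^ 2 + c ^ 2) / 16 * h3 + 1 / 4 * hcs
      nlinarith [sq_nonneg (Y1 - Y0)]
    have d02 : (X2 - X0) ^ 2 ≤ 1 / 4 := by
      have : (X2 - X0) ^ 2 + (Y2 - Y0) ^ 2 = 1 / 4 := by
        rw [← hX0, ← hX2, ← hY0, ← hY2]
        linear_combination (s ^ 2 + c ^ 2) / 16 * h3 + 1 / 4 * hcs
      nlinarith [sq_nonneg (Y2 - Y0)]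
    have d12 : (X2 - X1) ^ 2 ≤ 1 / 4 := by
      have : (X2 - X1) ^ 2 + (Y2 - Y1) ^ 2 = 1 / 4 := by
        rw [← hX1, ← hX2, ← hY1, ← hY2]
        linear_combination 1 / 4 * hcs
      nlinarith [sq_nonneg (Y2 - Y1)]
    rcases le_total X0 X1 with a | a <;> rcases le_total X1 X2 with e | e <;>
      rcases le_total X0 X2 with f | f
    · obtain ⟨u, v, h⟩ := tri_chord_sorted hH a e h0 h1 h2 (by linear_combination cr) (by linarith)
      exact ⟨u, v, Or.inr (Or.inl h)⟩
    · obtain ⟨u, v, h⟩ := tri_chord_sorted hH a e h0 h1 h2 (by linear_combination cr) (by linarith)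
      exact ⟨u, v, Or.inr (Or.inl h)⟩
    · obtain ⟨u, v, h⟩ := tri_chord_sorted hH f e h0 h2 h1 (by linear_combination cr) (by linarith)
      exact ⟨u, v, Or.inr (Or.inr h)⟩
    · obtain ⟨u, v, h⟩ := tri_chord_sorted hH f a h2 h0 h1 (by linear_combination cr) (by linarith)
      exact ⟨u, v, Or.inl h⟩
    · obtain ⟨u, v, h⟩ := tri_chord_sorted hH a f h1 h0 h2 (by linear_combination cr) (by linarith)
      exact ⟨u, v, Or.inl h⟩
    · obtain ⟨u, v, h⟩ := tri_chord_sorted hH e f h1 h2 h0 (by linear_combination cr) (by linarith)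
      exact ⟨u, v, Or.inr (Or.inr h)⟩
    · obtain ⟨u, v, h⟩ := tri_chord_sorted hH e a h2 h1 h0 (by linear_combination cr) (by linarith)
      exact ⟨u, v, Or.inr (Or.inl h)⟩
    · obtain ⟨u, v, h⟩ := tri_chord_sorted hH e a h2 h1 h0 (by linear_combination cr) (by linarith)
      exact ⟨u, v, Or.inr (Or.inl h)⟩
  obtain ⟨u, v, h | h | h⟩ := key
  exacts [⟨_, _, _, h⟩, ⟨_, _, _, h⟩, ⟨_, _, _, h⟩]

lemma drop_lemma {ι : Type} [Finite ι] [Nonempty ι] {H : Set E2} (hH : Convex ℝ H) {D : ℝ}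
    (hP : pt 0 0 ∈ H) (hQ : pt D 0 ∈ H) (X Y : ι → ℝ) (hx : ∀ i, 0 ≤ X i ∧ X i ≤ D)
    (hm : ∀ i, pt (X i) (Y i) ∈ H) :
    ∃ t c, (∀ i, pt (X i) (Y i + t) ∈ H) ∧ 0 ≤ c ∧ c ≤ D ∧
      pt c 0 ∈ convexHull ℝ (Set.range fun i => pt (X i) (Y i + t)) := by
  have hax : ∀ i, pt (X i) 0 ∈ H := by
    intro i
    have h := hx i
    rcases eq_or_lt_of_le (h.1.trans h.2) with h0 | h0
    · have : X i = 0 := by linarith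
      rwa [this]
    · have := comb_mem hH hP hQ (X i / D) (div_nonneg h.1 h0.le) ((div_le_one h0).2 h.2)
      convert this using 2
      · field_simp; ring
      · ring
  obtain ⟨i, hi⟩ := Finite.exists_min Y
  obtain ⟨j, hj⟩ := Finite.exists_max Y
  rcases lt_or_ge 0 (Y i) with h | h
  · refine ⟨-Y i, X i, fun k => ?_, (hx i).1, (hx i).2, ?_⟩
    · exact vert_mem hH (hax k) (hm k) (by linarith [hi k]) (by linarith)
    · exact subset_convexHull ℝ _ ⟨i, by simp⟩
  rcases lt_or_ge (Y j) 0 with h' | h'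
  · refine ⟨-Y j, X j, fun k => ?_, (hx j).1, (hx j).2, ?_⟩
    · exact vert_mem hH (hm k) (hax k) (by linarith) (by linarith [hj k])
    · exact subset_convexHull ℝ _ ⟨j, by simp⟩
  have mi : pt (X i) (Y i) ∈ convexHull ℝ (Set.range fun i => pt (X i) (Y i + 0)) :=
    subset_convexHull ℝ _ ⟨i, by simp⟩
  have mj : pt (X j) (Y j) ∈ convexHull ℝ (Set.range fun i => pt (X i) (Y i + 0)) :=
    subset_convexHull ℝ _ ⟨j, by simp⟩
  rcases eq_or_lt_of_le (h.trans h') with e | e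
  · have : Y i = 0 := by linarith
    rw [this] at mi
    exact ⟨0, X i, by simpa using hm, (hx i).1, (hx i).2, mi⟩
  · have hpos : 0 < Y j - Y i := by linarith
    have t0 : 0 ≤ -Y i / (Y j - Y i) := div_nonneg (by linarith) hpos.le
    have t1 : -Y i / (Y j - Y i) ≤ 1 := (div_le_one hpos).2 (by linarith)
    have := comb_mem (convex_convexHull ℝ _) mi mj _ t0 t1
    refine ⟨0, (1 - -Y i / (Y j - Y i)) * X i + -Y i / (Y j - Y i) * X j,
      by simpa using hm, ?_, ?_, ?_⟩
    · have := mul_nonneg t0 (hx j).1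
      have := mul_nonneg (sub_nonneg.2 t1) (hx i).1
      linarith
    · have := mul_le_mul_of_nonneg_left (hx j).2 t0
      have := mul_le_mul_of_nonneg_left (hx i).2 (sub_nonneg.2 t1)
      linarith
    · convert this using 2
      field_simp
      ring

lemma coord_convex (i : Fin 2) (l u : ℝ) : Convex ℝ {p : E2 | l ≤ p i ∧ p i ≤ u} := by
  intro p hp q hq s t hs ht hst
  simp only [Set.mem_ofPred_eq, PiLp.add_apply, PiLp.smul_apply, smul_eq_mul] at *
  have e : t = 1 - s := by linarith
  subst e
  constructor <;> nlinarith [hp.1, hp.2, hq.1, hq.2]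

lemma hull_coord {X : Set E2} {i : Fin 2} {l u : ℝ}
    (h : ∀ p ∈ X, l ≤ p i ∧ p i ≤ u) {p : E2} (hp : p ∈ convexHull ℝ X) :
    l ≤ p i ∧ p i ≤ u :=
  convexHull_min (fun p hp => h p hp) (coord_convex i l u) hp

lemma sqrt2_bound : √2 ≤ 1.4143 := by
  rw [Real.sqrt_le_left (by norm_num)]; norm_num

lemma sq_dx (x y a : ℝ) (k : Fin 4) :
    x - 0.236 ≤ sqVertex x y a k 0 ∧ sqVertex x y a k 0 ≤ x + 0.236 := by
  have h0 : 0 ≤ √2 := Real.sqrt_nonneg 2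
  have h1 := sqrt2_bound
  set θ := a + ((k : ℕ) : ℝ) * (π / 2) with hθ
  have e : sqVertex x y a k 0 = x + √2 / 6 * cos θ := rfl
  rw [e]
  have := Real.cos_le_one θ
  have := Real.neg_one_le_cos θ
  constructor <;> nlinarith

lemma tri_dx (x y b : ℝ) (j k : Fin 3) :
    triVertex x y b j 0 - 1 / 2 ≤ triVertex x y b k 0 ∧
      triVertex x y b k 0 ≤ triVertex x y b j 0 + 1 / 2 := by
  have h3 : √3 * √3 = 3 := Real.mul_self_sqrt (by norm_num)
  have hcs := Real.sin_sq_add_cos_sq b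
  have d01 : (triVertex x y b 0 0 - triVertex x y b 1 0) ^ 2 ≤ 1 / 4 := by
    simp only [triV0, triV1, pt_zero]
    nlinarith [sq_nonneg (√3 / 4 * sin b - cos b / 4)]
  have d02 : (triVertex x y b 0 0 - triVertex x y b 2 0) ^ 2 ≤ 1 / 4 := by
    simp only [triV0, triV2, pt_zero]
    nlinarith [sq_nonneg (√3 / 4 * sin b + cos b / 4)]
  have d12 : (triVertex x y b 1 0 - triVertex x y b 2 0) ^ 2 ≤ 1 / 4 := by
    simp only [triV1, triV2, pt_zero]
    nlinarith [sq_nonneg (cos b)]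
  have f : ∀ u v : ℝ, (u - v) ^ 2 ≤ 1 / 4 → -(1 / 2) ≤ u - v ∧ u - v ≤ 1 / 2 := fun u v h =>
    abs_le_of_sq_le_sq' (by linarith) (by norm_num)
  have f01 := f _ _ d01
  have f02 := f _ _ d02
  have f12 := f _ _ d12
  fin_cases j <;> fin_cases k <;> simp only [Fin.zero_eta, Fin.mk_one, Fin.reduceFinMk] <;>
    constructor <;> linarith

/-- All numerical consequences of the area bound for a normalised configuration. -/
lemma numeric {H : Set E2} (hH : Convex ℝ H) {D x1 y1 a x2 y2 b c d : ℝ} (hD : 1 ≤ D)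
    (hvol : volume H ≤ ENNReal.ofReal 0.23)
    (hP : pt 0 0 ∈ H) (hQ : pt D 0 ∈ H)
    (hS : ∀ k, sqVertex x1 y1 a k ∈ H) (hT : ∀ k, triVertex x2 y2 b k ∈ H)
    (hSx : ∀ k, 0 ≤ sqVertex x1 y1 a k 0 ∧ sqVertex x1 y1 a k 0 ≤ D)
    (hTx : ∀ k, 0 ≤ triVertex x2 y2 b k 0 ∧ triVertex x2 y2 b k 0 ≤ D)
    (hc0 : 0 ≤ c) (hcD : c ≤ D) (hd0 : 0 ≤ d) (hdD : d ≤ D)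
    (hc : pt c 0 ∈ convexHull ℝ (Set.range (sqVertex x1 y1 a)))
    (hd : pt d 0 ∈ convexHull ℝ (Set.range (triVertex x2 y2 b))) :
    D ≤ 1.07 ∧ d ≤ c + 1 ∧ c ≤ d + 1 := by
  obtain ⟨k, u, v, hu, hv, huv⟩ := tri_chord hH _ _ _ hT
  have hkx := hTx k
  have hdx : triVertex x2 y2 b k 0 - 1 / 2 ≤ d ∧ d ≤ triVertex x2 y2 b k 0 + 1 / 2 :=
    hull_coord (i := 0) (by rintro _ ⟨j, rfl⟩; exact tri_dx x2 y2 b k j) hd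
  have hcx : x1 - 0.236 ≤ c ∧ c ≤ x1 + 0.236 :=
    hull_coord (i := 0) (by rintro _ ⟨j, rfl⟩; exact sq_dx x1 y1 a j) hc
  have s1 : pt x1 (y1 - 1 / 6) ∈ H := by
    have := ball_sq hH x1 y1 a 0 (-1 / 6) hS (by norm_num)
    convert this using 2 <;> ring
  have s2 : pt x1 (y1 + 1 / 6) ∈ H := by
    have := ball_sq hH x1 y1 a 0 (1 / 6) hS (by norm_num)
    convert this using 2
    ring
  have hx1 : 0 ≤ x1 ∧ x1 ≤ D := by
    have h0 := hSx 0
    have h2 := hSx 2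
    rw [sqV0, pt_zero] at h0
    rw [sqV2, pt_zero] at h2
    constructor <;> linarith
  set X := triVertex x2 y2 b k 0
  refine ⟨?_, ?_, ?_⟩
  · have := hex_real hH hvol hkx.1 le_rfl hkx.2 (by linarith) (by linarith) hP hQ hu hv hu hv
    nlinarith
  · by_contra hcon
    push Not at hcon
    have := hex_real hH hvol hx1.1 (by linarith) hkx.2 (by linarith) (by linarith)
      hP hQ s1 s2 hu hv
    nlinarith
  · by_contra hcon
    push Not at hcon
    have := hex_real hH hvol hkx.1 (by linarith) hx1.2 (by linarith) (by linarith)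
      hP hQ hu hv s1 s2
    nlinarith

lemma y_bound {H : Set E2} (hH : Convex ℝ H) {D x y : ℝ} (hD : 1 ≤ D)
    (hvol : volume H ≤ ENNReal.ofReal 0.23)
    (hP : pt 0 0 ∈ H) (hQ : pt D 0 ∈ H) (hx0 : 0 ≤ x) (hxD : x ≤ D) (h : pt x y ∈ H) :
    -0.46 ≤ y ∧ y ≤ 0.46 := by
  have hax : pt x 0 ∈ H := by
    have := comb_mem hH hP hQ (x / D) (div_nonneg hx0 (by linarith))
      ((div_le_one (by linarith)).2 hxD)
    have hD0 : D ≠ 0 := by linarith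
    convert this using 2
    · field_simp; ring
    · ring
  rcases le_total 0 y with hy | hy
  · have := hex_real hH hvol hx0 le_rfl hxD hy hy hP hQ hax h hax h
    constructor <;> nlinarith
  · have := hex_real hH hvol hx0 le_rfl hxD hy hy hP hQ h hax h hax
    constructor <;> nlinarith

lemma config_finite (x1 y1 a x2 y2 b : ℝ) : (config x1 y1 a x2 y2 b).Finite := by
  unfold config
  exact ((Set.toFinite _).union (Set.finite_range _)).union (Set.finite_range _)

lemma hull_compact (x1 y1 a x2 y2 b : ℝ) :
    IsCompact (convexHull ℝ (config x1 y1 a x2 y2 b)) :=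
  (config_finite x1 y1 a x2 y2 b).isCompact_convexHull (𝕜 := ℝ)

lemma vol_ne_top (x1 y1 a x2 y2 b : ℝ) :
    volume (convexHull ℝ (config x1 y1 a x2 y2 b)) ≠ ⊤ :=
  (hull_compact ..).measure_lt_top.ne

lemma sq_shift (x y a u v : ℝ) (k : Fin 4) :
    sqVertex (x + u) (y + v) a k = pt (sqVertex x y a k 0 + u) (sqVertex x y a k 1 + v) := by
  simp only [sqVertex, pt_zero, pt_one]
  congr 1 <;> ring

lemma tri_shift (x y a u v : ℝ) (k : Fin 3) :
    triVertex (x + u) (y + v) a k = pt (triVertex x y a k 0 + u) (triVertex x y a k 1 + v) := by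
  simp only [triVertex, pt_zero, pt_one]
  congr 1 <;> ring

lemma shift_hull_mem {ι : Type} (V : ι → E2) (W : ι → E2) (s : E2) (h : ∀ i, W i = V i + s)
    {p : E2} (hp : p ∈ convexHull ℝ (Set.range V)) : p + s ∈ convexHull ℝ (Set.range W) := by
  have hc : Convex ℝ ((fun q => q + s) ⁻¹' convexHull ℝ (Set.range W)) :=
    (convex_convexHull ℝ _).translate_preimage_left s
  refine convexHull_min ?_ hc hp
  rintro _ ⟨i, rfl⟩
  exact subset_convexHull ℝ _ ⟨i, h i⟩

lemma mem_seg {x : ℝ} (h0 : 0 ≤ x) (h1 : x ≤ 1) : pt x 0 ∈ segEF := by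
  refine ⟨1 - x, x, by linarith, h0, by ring, ?_⟩
  rw [pt_comb]
  congr 1 <;> ring

lemma infDist_le {p : E2} (h0 : -0.07 ≤ p 0) (h1 : p 0 ≤ 1.07) (h2 : -0.46 ≤ p 1)
    (h3 : p 1 ≤ 0.46) : Metric.infDist p segEF ≤ 1 := by
  have key : ∃ x, 0 ≤ x ∧ x ≤ 1 ∧ (p 0 - x) ^ 2 ≤ 0.07 ^ 2 := by
    rcases le_total (p 0) 0 with h | h
    · exact ⟨0, le_rfl, by norm_num, by nlinarith⟩
    rcases le_total (p 0) 1 with h' | h'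
    · exact ⟨p 0, h, h', by norm_num⟩
    · exact ⟨1, by norm_num, le_rfl, by nlinarith⟩
  obtain ⟨x, hx0, hx1, hx⟩ := key
  refine (Metric.infDist_le_dist_of_mem (mem_seg hx0 hx1)).trans ?_
  have := pt_dist_sq p (pt x 0)
  simp only [pt_zero, pt_one] at this
  nlinarith [dist_nonneg (x := p) (y := pt x 0)]

/-- From a normalised configuration to one satisfying the geometric conditions. -/
lemma finish {H : Set E2} (hH : Convex ℝ H) {D x1 y1 a x2 y2 b : ℝ} (hD : 1 ≤ D)
    (hvol : volume H ≤ ENNReal.ofReal 0.23)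
    (hP : pt 0 0 ∈ H) (hQ : pt D 0 ∈ H)
    (hS : ∀ k, sqVertex x1 y1 a k ∈ H) (hT : ∀ k, triVertex x2 y2 b k ∈ H)
    (hSx : ∀ k, 0 ≤ sqVertex x1 y1 a k 0 ∧ sqVertex x1 y1 a k 0 ≤ D)
    (hTx : ∀ k, 0 ≤ triVertex x2 y2 b k 0 ∧ triVertex x2 y2 b k 0 ≤ D) :
    ∃ X1 Y1 X2 Y2, volume (convexHull ℝ (config X1 Y1 a X2 Y2 b)) ≤ volume H ∧
      K2 X1 Y1 a X2 Y2 b := by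
  obtain ⟨t, c, ht, hc0, hcD, hc⟩ := drop_lemma hH hP hQ
    (fun k => sqVertex x1 y1 a k 0) (fun k => sqVertex x1 y1 a k 1) hSx
    (fun k => by rw [pt_eta]; exact hS k)
  obtain ⟨r, d, hr, hd0, hdD, hd⟩ := drop_lemma hH hP hQ
    (fun k => triVertex x2 y2 b k 0) (fun k => triVertex x2 y2 b k 1) hTx
    (fun k => by rw [pt_eta]; exact hT k)
  have eS : ∀ k, sqVertex x1 (y1 + t) a k = pt (sqVertex x1 y1 a k 0) (sqVertex x1 y1 a k 1 + t) := by
    intro k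
    have := sq_shift x1 y1 a 0 t k
    simpa using this
  have eT : ∀ k, triVertex x2 (y2 + r) b k
      = pt (triVertex x2 y2 b k 0) (triVertex x2 y2 b k 1 + r) := by
    intro k
    have := tri_shift x2 y2 b 0 r k
    simpa using this
  simp only [← eS] at ht hc
  simp only [← eT] at hr hd
  have hSx' : ∀ k, 0 ≤ sqVertex x1 (y1 + t) a k 0 ∧ sqVertex x1 (y1 + t) a k 0 ≤ D := by
    intro k; rw [eS]; exact hSx k
  have hTx' : ∀ k, 0 ≤ triVertex x2 (y2 + r) b k 0 ∧ triVertex x2 (y2 + r) b k 0 ≤ D := by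
    intro k; rw [eT]; exact hTx k
  obtain ⟨hD', hdc, hcd⟩ := numeric hH hD hvol hP hQ ht hr hSx' hTx' hc0 hcD hd0 hdD hc hd
  generalize y1 + t = z1 at *
  generalize y2 + r = z2 at *
  obtain ⟨s, hs0, hsD, hsc, hsc', hsd, hsd'⟩ : ∃ s, 0 ≤ s ∧ s ≤ D - 1 ∧ s ≤ c ∧ c ≤ s + 1 ∧
      s ≤ d ∧ d ≤ s + 1 := by
    refine ⟨min (min c d) (D - 1), ?_, min_le_right _ _, ?_, ?_, ?_, ?_⟩
    · exact le_min (le_min hc0 hd0) (by linarith)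
    · exact (min_le_left _ _).trans (min_le_left _ _)
    · rcases min_choice (min c d) (D - 1) with h | h <;> rw [h]
      · rcases min_choice c d with h | h <;> rw [h] <;> linarith
      · linarith
    · exact (min_le_left _ _).trans (min_le_right _ _)
    · rcases min_choice (min c d) (D - 1) with h | h <;> rw [h]
      · rcases min_choice c d with h | h <;> rw [h] <;> linarith
      · linarith
  have fS : ∀ k, sqVertex (x1 - s) z1 a k = sqVertex x1 z1 a k + pt (-s) 0 := by
    intro k
    have := sq_shift x1 z1 a (-s) 0 k
    rw [← pt_add, pt_eta] at this
    simpa [sub_eq_add_neg] using this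
  have fT : ∀ k, triVertex (x2 - s) z2 b k = triVertex x2 z2 b k + pt (-s) 0 := by
    intro k
    have := tri_shift x2 z2 b (-s) 0 k
    rw [← pt_add, pt_eta] at this
    simpa [sub_eq_add_neg] using this
  refine ⟨x1 - s, z1, x2 - s, z2, ?_, ?_, ?_, ?_⟩
  · have hax : ∀ x, 0 ≤ x → x ≤ D → pt x 0 ∈ H := by
      intro x h0 h1
      have hD0 : D ≠ 0 := by linarith
      have := comb_mem hH hP hQ (x / D) (div_nonneg h0 (by linarith))
        ((div_le_one (by linarith)).2 h1)
      convert this using 2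
      · field_simp; ring
      · ring
    rw [← measure_preimage_add_right volume (pt s 0) H]
    refine measure_mono (convexHull_min ?_ (hH.translate_preimage_left _))
    have cancel : ∀ p : E2, p + pt (-s) 0 + pt s 0 = p := by
      intro p
      rw [add_assoc, pt_add]
      ext i; fin_cases i <;> simp
    rintro p ((hp | ⟨k, rfl⟩) | ⟨k, rfl⟩)
    · rcases hp with rfl | rfl
      · simp only [Set.mem_preimage, pt_add]
        simpa using hax s hs0 (by linarith)
      · simp only [Set.mem_preimage, pt_add]
        simpa using hax (1 + s) (by linarith) (by linarith)
    · simp only [Set.mem_preimage, fS, cancel]; exact ht k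
    · simp only [Set.mem_preimage, fT, cancel]; exact hr k
  · have bx : ∀ p ∈ convexHull ℝ (Set.range (sqVertex (x1 - s) z1 a)) ∪
        convexHull ℝ (Set.range (triVertex (x2 - s) z2 b)), -0.07 ≤ p 0 ∧ p 0 ≤ 1.07 := by
      rintro p (hp | hp)
      · refine hull_coord (i := 0) ?_ hp
        rintro _ ⟨k, rfl⟩
        rw [fS]
        simp only [PiLp.add_apply, pt_zero]
        have := hSx' k
        constructor <;> linarith
      · refine hull_coord (i := 0) ?_ hp
        rintro _ ⟨k, rfl⟩
        rw [fT]
        simp only [PiLp.add_apply, pt_zero]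
        have := hTx' k
        constructor <;> linarith
    have by' : ∀ p ∈ convexHull ℝ (Set.range (sqVertex (x1 - s) z1 a)) ∪
        convexHull ℝ (Set.range (triVertex (x2 - s) z2 b)), -0.46 ≤ p 1 ∧ p 1 ≤ 0.46 := by
      rintro p (hp | hp)
      · refine hull_coord (i := 1) ?_ hp
        rintro _ ⟨k, rfl⟩
        rw [fS]
        simp only [PiLp.add_apply, pt_one, add_zero]
        exact y_bound hH hD hvol hP hQ (hSx' k).1 (hSx' k).2 (by rw [pt_eta]; exact ht k)
      · refine hull_coord (i := 1) ?_ hp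
        rintro _ ⟨k, rfl⟩
        rw [fT]
        simp only [PiLp.add_apply, pt_one, add_zero]
        exact y_bound hH hD hvol hP hQ (hTx' k).1 (hTx' k).2 (by rw [pt_eta]; exact hr k)
    intro p hp
    exact ⟨infDist_le (bx p hp).1 (bx p hp).2 (by' p hp).1 (by' p hp).2, by' p hp⟩
  · refine ⟨pt c 0 + pt (-s) 0, shift_hull_mem _ _ _ fS hc, ?_⟩
    rw [pt_add, add_zero]
    exact mem_seg (by linarith) (by linarith)
  · refine ⟨pt d 0 + pt (-s) 0, shift_hull_mem _ _ _ fT hd, ?_⟩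
    rw [pt_add, add_zero]
    exact mem_seg (by linarith) (by linarith)

/-- Rotation by an angle. -/
noncomputable def rotLin (θ : ℝ) : E2 →ₗ[ℝ] E2 where
  toFun p := pt (cos θ * p 0 - sin θ * p 1) (sin θ * p 0 + cos θ * p 1)
  map_add' p q := by
    ext i; fin_cases i <;> simp <;> ring
  map_smul' r p := by
    ext i; fin_cases i <;> simp <;> ring

lemma rot_norm (θ : ℝ) (p : E2) : ‖rotLin θ p‖ = ‖p‖ := by
  rw [EuclideanSpace.norm_eq, EuclideanSpace.norm_eq]
  congr 1
  have h := Real.sin_sq_add_cos_sq θ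
  simp [Fin.sum_univ_two, sq_abs, rotLin]
  linear_combination (p 0 ^ 2 + p 1 ^ 2) * h

noncomputable def rotIso (θ : ℝ) : E2 ≃ₗᵢ[ℝ] E2 :=
  LinearIsometry.toLinearIsometryEquiv ⟨rotLin θ, rot_norm θ⟩ rfl

lemma rotIso_apply (θ : ℝ) (p : E2) :
    rotIso θ p = pt (cos θ * p 0 - sin θ * p 1) (sin θ * p 0 + cos θ * p 1) := rfl

lemma vol_rot (θ : ℝ) (H : Set E2) (w : E2) :
    volume ((fun q => rotIso θ q + w) ⁻¹' H) = volume H := by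
  have h1 : (fun q => rotIso θ q + w) ⁻¹' H = (rotIso θ) ⁻¹' ((fun q => q + w) ⁻¹' H) := rfl
  rw [h1]
  have := (rotIso θ).measurePreserving
  rw [← measure_preimage_add_right volume w H]
  exact this.measure_preimage_emb (rotIso θ).toHomeomorph.measurableEmbedding _

lemma exists_angle {c s : ℝ} (h : c ^ 2 + s ^ 2 = 1) : ∃ θ, cos θ = c ∧ sin θ = s := by
  have hn : ‖(⟨c, s⟩ : ℂ)‖ = 1 := by
    rw [← sq_eq_sq₀ (norm_nonneg _) zero_le_one, Complex.sq_norm, Complex.normSq_mk]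
    linarith
  have h0 : (⟨c, s⟩ : ℂ) ≠ 0 := by
    intro h; rw [h] at hn; simp at hn
  refine ⟨Complex.arg ⟨c, s⟩, ?_, ?_⟩
  · rw [Complex.cos_arg h0, hn]; simp
  · rw [Complex.sin_arg, hn]; simp

/-- Key reduction. -/
lemma reduce (x1 y1 a x2 y2 b : ℝ) (harea : area x1 y1 a x2 y2 b ≤ 0.23) :
    ∃ X1 Y1 A X2 Y2 B, area X1 Y1 A X2 Y2 B ≤ area x1 y1 a x2 y2 b ∧ K2 X1 Y1 A X2 Y2 B := by
  set X := config x1 y1 a x2 y2 b with hX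
  have hE : pt 0 0 ∈ X := Or.inl (Or.inl (Or.inl rfl))
  have hF : pt 1 0 ∈ X := Or.inl (Or.inl (Or.inr rfl))
  have hS : ∀ k, sqVertex x1 y1 a k ∈ X := fun k => Or.inl (Or.inr ⟨k, rfl⟩)
  have hT : ∀ k, triVertex x2 y2 b k ∈ X := fun k => Or.inr ⟨k, rfl⟩
  have hfin : X.Finite := config_finite ..
  obtain ⟨⟨P, Q⟩, ⟨hP, hQ⟩, hmax⟩ := Set.exists_max_image (X ×ˢ X) (fun z => dist z.1 z.2)
    (hfin.prod hfin) ⟨(pt 0 0, pt 0 0), hE, hE⟩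
  simp only at hP hQ hmax
  set D := dist P Q with hDdef
  have hD : 1 ≤ D := by
    have h1 := hmax (pt 0 0, pt 1 0) ⟨hE, hF⟩
    have h2 := pt_dist_sq (pt 0 0) (pt 1 0)
    simp only [pt_zero, pt_one] at h1 h2
    nlinarith [dist_nonneg (x := pt 0 0) (y := pt 1 0)]
  have hD0 : D ≠ 0 := by linarith
  have hDsq : D ^ 2 = (P 0 - Q 0) ^ 2 + (P 1 - Q 1) ^ 2 := pt_dist_sq P Q
  obtain ⟨θ, hc, hs⟩ := exists_angle (c := (Q 0 - P 0) / D) (s := (Q 1 - P 1) / D) (by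
    field_simp; linarith)
  have hcs := Real.sin_sq_add_cos_sq θ
  have hc' : D * cos θ = Q 0 - P 0 := by rw [hc]; field_simp
  have hs' : D * sin θ = Q 1 - P 1 := by rw [hs]; field_simp
  set H := (fun q => rotIso θ q + P) ⁻¹' convexHull ℝ X with hH
  have hvolH : volume H = volume (convexHull ℝ X) := vol_rot ..
  have hHc : Convex ℝ H := by
    have h1 : Convex ℝ ((fun q => q + P) ⁻¹' convexHull ℝ X) :=
      (convex_convexHull ℝ X).translate_preimage_left P
    exact h1.linear_preimage (rotIso θ).toLinearEquiv.toLinearMap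
  have hmem : ∀ q, rotIso θ q + P ∈ X → q ∈ H := fun q hq => subset_convexHull ℝ X hq
  have hbd : ∀ q, rotIso θ q + P ∈ X → 0 ≤ q 0 ∧ q 0 ≤ D := by
    intro q hq
    have m1 := hmax (_, P) ⟨hq, hP⟩
    have m2 := hmax (_, Q) ⟨hq, hQ⟩
    simp only at m1 m2
    have e1 := pt_dist_sq (rotIso θ q + P) P
    have e2 := pt_dist_sq (rotIso θ q + P) Q
    have r1 : dist (rotIso θ q + P) P ^ 2 ≤ D ^ 2 := pow_le_pow_left₀ dist_nonneg m1 2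
    have r2 : dist (rotIso θ q + P) Q ^ 2 ≤ D ^ 2 := pow_le_pow_left₀ dist_nonneg m2 2
    rw [e1] at r1
    rw [e2] at r2
    simp only [rotIso_apply, PiLp.add_apply, pt_zero, pt_one] at r1 r2
    have k1 : q 0 ^ 2 + q 1 ^ 2 ≤ D ^ 2 := by
      have : q 0 ^ 2 + q 1 ^ 2 = (cos θ * q 0 - sin θ * q 1 + P 0 - P 0) ^ 2 +
        (sin θ * q 0 + cos θ * q 1 + P 1 - P 1) ^ 2 := by
        linear_combination (-(q 0 ^ 2 + q 1 ^ 2)) * hcs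
      linarith
    have k2 : (q 0 - D) ^ 2 + q 1 ^ 2 ≤ D ^ 2 := by
      have : (q 0 - D) ^ 2 + q 1 ^ 2 = (cos θ * q 0 - sin θ * q 1 + P 0 - Q 0) ^ 2 +
        (sin θ * q 0 + cos θ * q 1 + P 1 - Q 1) ^ 2 := by
        have g0 : Q 0 = P 0 + D * cos θ := by linarith
        have g1 : Q 1 = P 1 + D * sin θ := by linarith
        rw [g0, g1]
        linear_combination (-((q 0 - D) ^ 2 + q 1 ^ 2)) * hcs
      linarith
    constructor
    · nlinarith [sq_nonneg (q 1), sq_nonneg (q 0)]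
    · nlinarith [sq_nonneg (q 1), sq_nonneg (q 0)]
  -- inverse images of the centres
  set X1 := cos θ * (x1 - P 0) + sin θ * (y1 - P 1) with hX1
  set Y1 := -sin θ * (x1 - P 0) + cos θ * (y1 - P 1) with hY1
  set X2 := cos θ * (x2 - P 0) + sin θ * (y2 - P 1) with hX2
  set Y2 := -sin θ * (x2 - P 0) + cos θ * (y2 - P 1) with hY2
  have iS : ∀ k, rotIso θ (sqVertex X1 Y1 (a - θ) k) + P = sqVertex x1 y1 a k := by
    intro k
    have ha : a + ((k : ℕ) : ℝ) * (π / 2) = (a - θ + ((k : ℕ) : ℝ) * (π / 2)) + θ := by ring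
    simp only [sqVertex, ha]
    generalize a - θ + ((k : ℕ) : ℝ) * (π / 2) = φ
    rw [cos_add, sin_add, rotIso_apply]
    ext i; fin_cases i
    · simp
      rw [hX1, hY1]
      linear_combination (x1 - P 0) * hcs
    · simp
      rw [hX1, hY1]
      linear_combination (y1 - P 1) * hcs
  have iT : ∀ k, rotIso θ (triVertex X2 Y2 (b - θ) k) + P = triVertex x2 y2 b k := by
    intro k
    have ha : b + ((k : ℕ) : ℝ) * (2 * π / 3) = (b - θ + ((k : ℕ) : ℝ) * (2 * π / 3)) + θ := by ring
    simp only [triVertex, ha]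
    generalize b - θ + ((k : ℕ) : ℝ) * (2 * π / 3) = φ
    rw [cos_add, sin_add, rotIso_apply]
    ext i; fin_cases i
    · simp
      rw [hX2, hY2]
      linear_combination (x2 - P 0) * hcs
    · simp
      rw [hX2, hY2]
      linear_combination (y2 - P 1) * hcs
  have mP : pt 0 0 ∈ H := by
    apply hmem
    convert hP using 1
    rw [rotIso_apply]
    ext i; fin_cases i <;> simp
  have mQ : pt D 0 ∈ H := by
    apply hmem
    convert hQ using 1
    rw [rotIso_apply]
    ext i; fin_cases i
    · simp; linarith
    · simp; linarith
  have hv : volume H ≤ ENNReal.ofReal 0.23 := by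
    rw [hvolH]
    exact (ENNReal.le_ofReal_iff_toReal_le (vol_ne_top x1 y1 a x2 y2 b) (by norm_num)).2 harea
  obtain ⟨U1, V1, U2, V2, hle, hK⟩ := finish hHc hD hv mP mQ
    (fun k => hmem _ (by rw [iS]; exact hS k)) (fun k => hmem _ (by rw [iT]; exact hT k))
    (fun k => hbd _ (by rw [iS]; exact hS k)) (fun k => hbd _ (by rw [iT]; exact hT k))
  refine ⟨U1, V1, _, U2, V2, _, ?_, hK⟩
  rw [hvolH] at hle
  exact ENNReal.toReal_mono (vol_ne_top x1 y1 a x2 y2 b) hle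

lemma area_le_scale (x1 y1 a x2 y2 b x1' y1' a' x2' y2' b' ε : ℝ) (hε : 0 < ε)
    (hS : ∀ k, dist (sqVertex x1 y1 a k) (sqVertex x1' y1' a' k) ≤ ε)
    (hT : ∀ k, dist (triVertex x2 y2 b k) (triVertex x2' y2' b' k) ≤ ε) :
    area x1 y1 a x2 y2 b ≤ (1 + 6 * ε) ^ 2 * area x1' y1' a' x2' y2' b' := by
  set H := convexHull ℝ (config x1' y1' a' x2' y2' b') with hH
  have hc : Convex ℝ H := convex_convexHull ℝ _
  have hS' : ∀ k, sqVertex x1' y1' a' k ∈ H :=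
    fun k => subset_convexHull ℝ _ (Or.inl (Or.inr ⟨k, rfl⟩))
  have hT' : ∀ k, triVertex x2' y2' b' k ∈ H :=
    fun k => subset_convexHull ℝ _ (Or.inr ⟨k, rfl⟩)
  have hr : (1 + 6 * ε) ≠ 0 := by positivity
  have step : ∀ p q : E2, q ∈ H → dist p q ≤ ε →
      p ∈ AffineMap.homothety (pt x1' y1') (1 + 6 * ε) '' H := by
    intro p q hq hd
    have hb : pt (x1' + (p 0 - q 0) / (6 * ε)) (y1' + (p 1 - q 1) / (6 * ε)) ∈ H := by
      refine ball_sq hc _ _ a' _ _ hS' ?_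
      have h1 := pt_dist_sq p q
      have h2 : dist p q ^ 2 ≤ ε ^ 2 := pow_le_pow_left₀ dist_nonneg hd 2
      rw [h1] at h2
      rw [div_pow, div_pow, ← add_div, div_le_iff₀ (by positivity)]
      nlinarith
    refine ⟨(1 / (1 + 6 * ε)) • q + (6 * ε / (1 + 6 * ε)) •
      pt (x1' + (p 0 - q 0) / (6 * ε)) (y1' + (p 1 - q 1) / (6 * ε)),
      hc hq hb (by positivity) (by positivity) (by field_simp), ?_⟩
    rw [AffineMap.homothety_apply]
    ext i
    fin_cases i
    · simp
      field_simp
      ring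
    · simp
      field_simp
      ring
  have hsub : convexHull ℝ (config x1 y1 a x2 y2 b) ⊆
      AffineMap.homothety (pt x1' y1') (1 + 6 * ε) '' H := by
    refine convexHull_min ?_ (hc.affine_image _)
    rintro p ((hp | ⟨k, rfl⟩) | ⟨k, rfl⟩)
    · refine step p p (subset_convexHull ℝ _ (Or.inl (Or.inl hp))) ?_
      simp [hε.le]
    · exact step _ _ (hS' k) (hS k)
    · exact step _ _ (hT' k) (hT k)
  have hm := measure_mono (μ := volume) hsub
  rw [Measure.addHaar_image_homothety] at hm
  have hfr : Module.finrank ℝ E2 = 2 := by simp [E2]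
  rw [hfr, abs_of_nonneg (by positivity)] at hm
  have := ENNReal.toReal_mono
    (ENNReal.mul_ne_top ENNReal.ofReal_ne_top (vol_ne_top x1' y1' a' x2' y2' b')) hm
  rw [ENNReal.toReal_mul, ENNReal.toReal_ofReal (by positivity)] at this
  exact this

abbrev V6 := ℝ × ℝ × ℝ × ℝ × ℝ × ℝ

noncomputable def areaV (v : V6) : ℝ := area v.1 v.2.1 v.2.2.1 v.2.2.2.1 v.2.2.2.2.1 v.2.2.2.2.2

lemma continuous_pt {f g : V6 → ℝ} (hf : Continuous f) (hg : Continuous g) :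
    Continuous fun v => pt (f v) (g v) := by
  have : Continuous fun v => (![f v, g v] : Fin 2 → ℝ) := by
    refine continuous_pi fun i => ?_
    fin_cases i
    · exact hf
    · exact hg
  exact (PiLp.continuous_toLp 2 _).comp this

lemma cont_sq (k : Fin 4) : Continuous fun v : V6 => sqVertex v.1 v.2.1 v.2.2.1 k := by
  unfold sqVertex
  exact continuous_pt (by fun_prop) (by fun_prop)

lemma cont_tri (k : Fin 3) :
    Continuous fun v : V6 => triVertex v.2.2.2.1 v.2.2.2.2.1 v.2.2.2.2.2 k := by
  unfold triVertex
  exact continuous_pt (by fun_prop) (by fun_prop)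

lemma area_lsc : LowerSemicontinuous areaV := by
  intro v y hy
  have h1 : Filter.Tendsto (fun ε : ℝ => (1 + 6 * ε) ^ 2 * y) (nhdsWithin 0 (Set.Ioi 0))
      (nhds y) := by
    have : Continuous fun ε : ℝ => (1 + 6 * ε) ^ 2 * y := by fun_prop
    have h := this.tendsto 0
    simp at h
    exact h.mono_left nhdsWithin_le_nhds
  obtain ⟨ε, hε1, hε⟩ := ((h1.eventually_lt_const hy).and self_mem_nhdsWithin).exists
  have hε' : 0 < ε := hε
  have eS : ∀ᶠ w in nhds v, ∀ k, dist (sqVertex v.1 v.2.1 v.2.2.1 k)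
      (sqVertex w.1 w.2.1 w.2.2.1 k) < ε := by
    rw [Filter.eventually_all]
    intro k
    have := ((cont_sq k).tendsto v).eventually (Metric.ball_mem_nhds _ hε')
    filter_upwards [this] with w hw
    rw [dist_comm]; exact hw
  have eT : ∀ᶠ w in nhds v, ∀ k, dist (triVertex v.2.2.2.1 v.2.2.2.2.1 v.2.2.2.2.2 k)
      (triVertex w.2.2.2.1 w.2.2.2.2.1 w.2.2.2.2.2 k) < ε := by
    rw [Filter.eventually_all]
    intro k
    have := ((cont_tri k).tendsto v).eventually (Metric.ball_mem_nhds _ hε')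
    filter_upwards [this] with w hw
    rw [dist_comm]; exact hw
  filter_upwards [eS, eT] with w hS hT
  have := area_le_scale _ _ _ _ _ _ _ _ _ _ _ _ ε hε' (fun k => (hS k).le) (fun k => (hT k).le)
  have h2 : (1 + 6 * ε) ^ 2 * y < (1 + 6 * ε) ^ 2 * areaV w := lt_of_lt_of_le hε1 this
  exact lt_of_mul_lt_mul_left h2 (by positivity)

lemma half_convex (α β γ : ℝ) : Convex ℝ {p : E2 | α * p 0 + β * p 1 ≤ γ} := by
  intro p hp q hq s t hs ht hst
  simp only [Set.mem_ofPred_eq, PiLp.add_apply, PiLp.smul_apply, smul_eq_mul] at *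
  have h1 := mul_le_mul_of_nonneg_left hp hs
  have h2 := mul_le_mul_of_nonneg_left hq ht
  have h3 : s * γ + t * γ = γ := by rw [← add_mul, hst, one_mul]
  linarith

lemma hull_half {X : Set E2} (α β γ : ℝ) (h : ∀ p ∈ X, α * p 0 + β * p 1 ≤ γ) {p : E2}
    (hp : p ∈ convexHull ℝ X) : α * p 0 + β * p 1 ≤ γ :=
  convexHull_min (fun p hp => h p hp) (half_convex α β γ) hp

lemma sqrt3_lo : 1.73205 < √3 := Real.lt_sqrt_of_sq_lt (by norm_num)
lemma sqrt3_hi : √3 < 1.732051 := by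
  rw [Real.sqrt_lt' (by norm_num)]; norm_num

/-- The explicit configuration. -/
noncomputable def vStar : V6 :=
  (5 / 6 - √3 / 12, √3 / 6 - 1 / 12, π / 4 + π / 6, 3 / 4, √3 / 12, π / 2)

lemma config_star (P : E2 → Prop) (h0 : P (pt 0 0)) (h1 : P (pt 1 0))
    (s0 : P (pt (3 / 4) (√3 / 4)))
    (s1 : P (pt (3 / 4 - √3 / 6) (√3 / 4 - 1 / 6)))
    (s2 : P (pt (11 / 12 - √3 / 6) (√3 / 12 - 1 / 6)))
    (s3 : P (pt (11 / 12) (√3 / 12)))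
    (t1 : P (pt (1 / 2) 0)) :
    ∀ p ∈ config (5 / 6 - √3 / 12) (√3 / 6 - 1 / 12) (π / 4 + π / 6) (3 / 4) (√3 / 12) (π / 2),
      P p := by
  have h2 : √2 * √2 = 2 := Real.mul_self_sqrt (by norm_num)
  have hc : √2 / 6 * cos (π / 4 + π / 6) = (√3 - 1) / 12 := by
    rw [cos_add, cos_pi_div_four, cos_pi_div_six, sin_pi_div_four, sin_pi_div_six]
    linear_combination (√3 - 1) / 24 * h2
  have hs : √2 / 6 * sin (π / 4 + π / 6) = (√3 + 1) / 12 := by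
    rw [sin_add, cos_pi_div_four, cos_pi_div_six, sin_pi_div_four, sin_pi_div_six]
    linear_combination (√3 + 1) / 24 * h2
  rintro p ((hp | ⟨k, rfl⟩) | ⟨k, rfl⟩)
  · rcases hp with rfl | rfl
    · exact h0
    · exact h1
  · fin_cases k <;> simp only [Fin.zero_eta, Fin.mk_one, Fin.reduceFinMk]
    · rw [sqV0, hc, hs]; convert s0 using 2 <;> ring
    · rw [sqV1, hc, hs]; convert s1 using 2 <;> ring
    · rw [sqV2, hc, hs]; convert s2 using 2 <;> ring
    · rw [sqV3, hc, hs]; convert s3 using 2 <;> ring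
  · fin_cases k <;> simp only [Fin.zero_eta, Fin.mk_one, Fin.reduceFinMk]
    · rw [triV0, cos_pi_div_two, sin_pi_div_two]; convert s0 using 2 <;> ring
    · rw [triV1, cos_pi_div_two, sin_pi_div_two]; convert t1 using 2 <;> ring
    · rw [triV2, cos_pi_div_two, sin_pi_div_two]; convert h1 using 2 <;> ring

lemma area_star : areaV vStar ≤ 0.23 := by
  have l3 := sqrt3_lo
  have u3 := sqrt3_hi
  set X := config (5 / 6 - √3 / 12) (√3 / 6 - 1 / 12) (π / 4 + π / 6) (3 / 4) (√3 / 12) (π / 2)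
    with hX
  have half : ∀ α β γ : ℝ, 0 ≤ γ → α ≤ γ → α * (3 / 4) + β * (√3 / 4) ≤ γ →
      α * (3 / 4 - √3 / 6) + β * (√3 / 4 - 1 / 6) ≤ γ →
      α * (11 / 12 - √3 / 6) + β * (√3 / 12 - 1 / 6) ≤ γ →
      α * (11 / 12) + β * (√3 / 12) ≤ γ → α * (1 / 2) ≤ γ →
      ∀ p ∈ convexHull ℝ X, α * p 0 + β * p 1 ≤ γ := by
    intro α β γ h0 h1 h2 h3 h4 h5 h6 p hp
    refine hull_half α β γ (config_star _ ?_ ?_ ?_ ?_ ?_ ?_ ?_) hp <;>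
      simp only [pt_zero, pt_one] <;> linarith
  have a1 := half (-1) 0 0 (by linarith) (by linarith) (by linarith) (by linarith) (by linarith)
    (by linarith) (by linarith)
  have a2 := half 1 0 1 (by linarith) (by linarith) (by linarith) (by linarith) (by linarith)
    (by linarith) (by linarith)
  have b1 := half (-0.5774) 1 0 (by linarith) (by linarith) (by linarith) (by linarith)
    (by linarith) (by linarith) (by linarith)
  have b2 := half 1.7321 1 1.7321 (by linarith) (by linarith) (by linarith) (by linarith)
    (by linarith) (by linarith) (by linarith)
  have c1 := half (-0.036) (-1) 0 (by linarith) (by linarith) (by linarith) (by linarith)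
    (by linarith) (by linarith) (by linarith)
  have c2 := half 0.0605 (-1) 0.0605 (by linarith) (by linarith) (by linarith) (by linarith)
    (by linarith) (by linarith) (by linarith)
  have hsub : convexHull ℝ X ⊆ region (-0.0001) 0.63 (-0.036) (-0.0001) 0.5774 0.0001 ∪
      region 0.63 0.75 0.0605 (-0.0606) 0.5774 0.0001 ∪
      region 0.75 1 0.0605 (-0.0606) (-1.7321) 1.7322 := by
    intro p hp
    have := a1 p hp
    have := a2 p hp
    have := b1 p hp
    have := b2 p hp
    have := c1 p hp
    have := c2 p hp
    rcases le_or_gt (p 0) 0.63 with h | h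
    · left; left
      exact ⟨by linarith, by linarith, by linarith, by linarith⟩
    rcases le_or_gt (p 0) 0.75 with h' | h'
    · left; right
      exact ⟨by linarith, by linarith, by linarith, by linarith⟩
    · right
      exact ⟨by linarith, by linarith, by linarith, by linarith⟩
  have hv : volume (convexHull ℝ X) ≤ ENNReal.ofReal 0.23 := by
    refine (measure_mono hsub).trans ((measure_union_le _ _).trans
      ((add_le_add_left (measure_union_le _ _) _).trans ?_))
    rw [region_vol _ _ _ _ _ _ (by norm_num) (by norm_num) (by norm_num),
      region_vol _ _ _ _ _ _ (by norm_num) (by norm_num) (by norm_num),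
      region_vol _ _ _ _ _ _ (by norm_num) (by norm_num) (by norm_num),
      ← ENNReal.ofReal_add (by norm_num) (by norm_num),
      ← ENNReal.ofReal_add (by norm_num) (by norm_num)]
    exact ENNReal.ofReal_le_ofReal (by norm_num)
  exact ENNReal.toReal_le_of_le_ofReal (by norm_num) hv

lemma angle_norm (a : ℝ) : ∃ a' ∈ Set.Icc 0 (2 * π), ∀ t, cos (a' + t) = cos (a + t) ∧
    sin (a' + t) = sin (a + t) := by
  obtain ⟨n, hn, _⟩ := existsUnique_sub_zsmul_mem_Ico Real.two_pi_pos a 0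
  simp only [zsmul_eq_mul, zero_add] at hn
  refine ⟨a - n * (2 * π), ⟨hn.1, hn.2.le⟩, fun t => ?_⟩
  have : a - n * (2 * π) + t = a + t - n * (2 * π) := by ring
  rw [this, Real.cos_sub_int_mul_two_pi, Real.sin_sub_int_mul_two_pi]
  exact ⟨rfl, rfl⟩

lemma hull_pt_bound {p : E2} (h : Metric.infDist p segEF ≤ 1) : -2 ≤ p 0 ∧ p 0 ≤ 3 := by
  have hne : segEF.Nonempty := ⟨_, mem_seg le_rfl zero_le_one⟩
  obtain ⟨q, hq, hpq⟩ := (Metric.infDist_lt_iff hne).1 (lt_of_le_of_lt h one_lt_two)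
  have hq0 : 0 ≤ q 0 ∧ q 0 ≤ 1 := by
    obtain ⟨s, t, hs, ht, hst, rfl⟩ := hq
    rw [pt_comb, pt_zero]
    constructor <;> linarith
  have h1 := pt_dist_sq p q
  have h2 : (p 0 - q 0) ^ 2 ≤ 2 ^ 2 := by
    nlinarith [sq_nonneg (p 1 - q 1), dist_nonneg (x := p) (y := q)]
  have := abs_le_of_sq_le_sq' h2 (by norm_num)
  constructor <;> linarith

def box : Set V6 := Set.Icc (-4) 4 ×ˢ Set.Icc (-4) 4 ×ˢ Set.Icc 0 (2 * π) ×ˢ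
  Set.Icc (-4) 4 ×ˢ Set.Icc (-4) 4 ×ˢ Set.Icc 0 (2 * π)

lemma box_compact : IsCompact box :=
  isCompact_Icc.prod (isCompact_Icc.prod (isCompact_Icc.prod
    (isCompact_Icc.prod (isCompact_Icc.prod isCompact_Icc))))

lemma K2_box {x1 y1 a x2 y2 b : ℝ} (h : K2 x1 y1 a x2 y2 b) :
    ∃ v ∈ box, areaV v = area x1 y1 a x2 y2 b := by
  obtain ⟨a', ha, ha'⟩ := angle_norm a
  obtain ⟨b', hb, hb'⟩ := angle_norm b
  have s2 : 0 ≤ √2 ∧ √2 ≤ 2 := ⟨Real.sqrt_nonneg 2, by linarith [sqrt2_bound]⟩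
  have s3 : 0 ≤ √3 ∧ √3 ≤ 2 := ⟨Real.sqrt_nonneg 3, by linarith [sqrt3_hi]⟩
  have small : ∀ r t : ℝ, 0 ≤ r ∧ r ≤ 2 → -1 ≤ t → t ≤ 1 → -1 ≤ r / 6 * t ∧ r / 6 * t ≤ 1 := by
    intro r t hr h1 h2
    constructor <;> nlinarith [hr.1, hr.2]
  have hS := h.1 (sqVertex x1 y1 a 0) (Or.inl (subset_convexHull ℝ _ ⟨0, rfl⟩))
  have hT := h.1 (triVertex x2 y2 b 0) (Or.inr (subset_convexHull ℝ _ ⟨0, rfl⟩))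
  have bS := hull_pt_bound hS.1
  have bT := hull_pt_bound hT.1
  have cS := hS.2
  have cT := hT.2
  rw [sqV0] at bS cS
  rw [triV0] at bT cT
  simp only [pt_zero, pt_one, Set.mem_Icc] at bS bT cS cT
  have k1 := small _ _ s2 (neg_one_le_cos a) (cos_le_one a)
  have k2 := small _ _ s2 (neg_one_le_sin a) (sin_le_one a)
  have k3 := small _ _ s3 (neg_one_le_cos b) (cos_le_one b)
  have k4 := small _ _ s3 (neg_one_le_sin b) (sin_le_one b)
  refine ⟨(x1, y1, a', x2, y2, b'), ⟨⟨?_, ?_⟩, ⟨?_, ?_⟩, ha, ⟨?_, ?_⟩, ⟨?_, ?_⟩, hb⟩, ?_⟩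
  · show -4 ≤ x1
    linarith
  · show x1 ≤ 4
    linarith
  · show -4 ≤ y1
    linarith
  · show y1 ≤ 4
    linarith
  · show -4 ≤ x2
    linarith
  · show x2 ≤ 4
    linarith
  · show -4 ≤ y2
    linarith
  · show y2 ≤ 4
    linarith
  · have e1 : sqVertex x1 y1 a' = sqVertex x1 y1 a := by
      funext k
      simp only [sqVertex, (ha' _).1, (ha' _).2]
    have e2 : triVertex x2 y2 b' = triVertex x2 y2 b := by
      funext k
      simp only [triVertex, (hb' _).1, (hb' _).2]
    simp only [areaV, area, config, e1, e2]

theorem exists_min_in_K2 :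
    ∃ v0 : ℝ × ℝ × ℝ × ℝ × ℝ × ℝ,
      (∀ v : ℝ × ℝ × ℝ × ℝ × ℝ × ℝ,
        area v0.1 v0.2.1 v0.2.2.1 v0.2.2.2.1 v0.2.2.2.2.1 v0.2.2.2.2.2 ≤
          area v.1 v.2.1 v.2.2.1 v.2.2.2.1 v.2.2.2.2.1 v.2.2.2.2.2) ∧
      K2 v0.1 v0.2.1 v0.2.2.1 v0.2.2.2.1 v0.2.2.2.2.1 v0.2.2.2.2.2 := by
  have hred : ∀ v : V6, areaV v ≤ 0.23 → ∃ w ∈ box, areaV w ≤ areaV v := by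
    intro v hv
    obtain ⟨X1, Y1, A, X2, Y2, B, hle, hK⟩ := reduce _ _ _ _ _ _ hv
    obtain ⟨w, hw, he⟩ := K2_box hK
    exact ⟨w, hw, he.le.trans hle⟩
  obtain ⟨w0, hw0, hw0le⟩ := hred vStar area_star
  obtain ⟨m, hm, hmin⟩ := (area_lsc.lowerSemicontinuousOn box).exists_isMinOn ⟨w0, hw0⟩ box_compact
  have hm23 : areaV m ≤ 0.23 := (hmin hw0).trans (hw0le.trans area_star)
  obtain ⟨X1, Y1, A, X2, Y2, B, hle, hK⟩ := reduce _ _ _ _ _ _ hm23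
  refine ⟨(X1, Y1, A, X2, Y2, B), fun v => ?_, hK⟩
  refine hle.trans ?_
  rcases le_total (areaV v) 0.23 with h | h
  · obtain ⟨w, hw, hwle⟩ := hred v h
    exact (hmin hw).trans hwle
  · exact hm23.trans h
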